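/- The six subgroups have orders |Γ_A| = 128, |Γ_B| = 32, |Γ_C| = 128, |Γ_{A₁}| = 16, |Γ_{B₁}| = 8, and |Γ_{C₁}| = 16. -/

import Mathlib

/-!
`Γ_A = ⟨β, γ⟩⟨bβ, cγ⟩`, `Γ_B = ⟨α, γ⟩⟨aα, c⟩` and `Γ_C = ⟨α, β⟩⟨a, b⟩` are products of two commuting
dihedral groups whose intersection is their common center, of order two. Since
`|H ⊔ K| * |H ⊓ K| = |H| * |K|`, their orders are `16 * 16 / 2`, `8 * 8 / 2` and `16 * 16 / 2`. The
three smaller groups arise from a dihedral group of order eight, or a group of order two, by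
adjoining central involutions one at a time.

The orders of the rotations come from wreath recursion: an element `g` fixing first letters is
determined by its sections `(g₁, g₂, g₃, g₄)`, the actions on the tails. The sections of `(αγ)²` are
all `β`, those of `(αβ)⁴ = (ab)⁴` are all `(αγ)²`, and `(βγ)⁸` and `(bc)⁴` have only their
inverses and `1` as sections, hence are trivial by induction on words.
-/

/-- The alphabet `X = {1,2,3,4}`, encoded as `Fin 4` (letter i ↔ `i-1`). -/
abbrev Alph : Type := Fin 4

/-- The set `X*` of finite words over the alphabet. -/
abbrev Word : Type := List Alph

/-- The permutation σ = (12)(34) of the alphabet. -/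
def permSigma : Alph → Alph := ![1, 0, 3, 2]

/-- The permutation π = (13)(24) of the alphabet. -/
def permPi : Alph → Alph := ![2, 3, 0, 1]

/-- A system of six bijections α, β, γ, a, b, c of `X*` satisfying the defining
recursions (each fixes the empty word; the recursions uniquely determine them). -/
structure NekSystem where
  α : Equiv.Perm Word
  β : Equiv.Perm Word
  γ : Equiv.Perm Word
  a : Equiv.Perm Word
  b : Equiv.Perm Word
  c : Equiv.Perm Word
  hαnil : α [] = []
  hβnil : β [] = []
  hγnil : γ [] = []
  hanil : a [] = []
  hbnil : b [] = []
  hcnil : c [] = []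
  hα : ∀ (x : Alph) (w : Word), α (x :: w) = permSigma x :: w
  ha : ∀ (x : Alph) (w : Word), a (x :: w) = permPi x :: w
  hβ0 : ∀ w : Word, β (0 :: w) = 0 :: α w
  hβ1 : ∀ w : Word, β (1 :: w) = 1 :: γ w
  hβ2 : ∀ w : Word, β (2 :: w) = 2 :: α w
  hβ3 : ∀ w : Word, β (3 :: w) = 3 :: γ w
  hγ0 : ∀ w : Word, γ (0 :: w) = 0 :: β w
  hγ1 : ∀ w : Word, γ (1 :: w) = 1 :: w
  hγ2 : ∀ w : Word, γ (2 :: w) = 2 :: w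
  hγ3 : ∀ w : Word, γ (3 :: w) = 3 :: β w
  hb0 : ∀ w : Word, b (0 :: w) = 0 :: a (α w)
  hb1 : ∀ w : Word, b (1 :: w) = 1 :: a (α w)
  hb2 : ∀ w : Word, b (2 :: w) = 2 :: c w
  hb3 : ∀ w : Word, b (3 :: w) = 3 :: c w
  hc0 : ∀ w : Word, c (0 :: w) = 0 :: b (β w)
  hc1 : ∀ w : Word, c (1 :: w) = 1 :: b (β w)
  hc2 : ∀ w : Word, c (2 :: w) = 2 :: b w
  hc3 : ∀ w : Word, c (3 :: w) = 3 :: b w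

/-! ### Products of subgroups and involutions -/

section Group

open Subgroup

variable {G : Type*} [Group G]

lemma card_sup_mul_card_inf {H K : Subgroup G} (hHK : H ≤ normalizer K) :
    Nat.card ↥(H ⊔ K) * Nat.card ↥(H ⊓ K) = Nat.card H * Nat.card K := by
  have hsecond : K.relIndex (H ⊔ K) = K.relIndex H :=
    letI := normal_subgroupOf_of_le_normalizer hHK
    letI := normal_subgroupOf_sup_of_le_normalizer hHK
    Nat.card_congr (QuotientGroup.quotientInfEquivProdNormalizerQuotient H K hHK).toEquiv.symm
  have hsup : Nat.card K * K.relIndex (H ⊔ K) = Nat.card ↥(H ⊔ K) := by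
    simpa only [relIndex_bot_left] using relIndex_mul_relIndex ⊥ K (H ⊔ K) bot_le le_sup_right
  have hinf : Nat.card ↥(H ⊓ K) * K.relIndex H = Nat.card H := by
    simpa only [relIndex_bot_left, inf_relIndex_left] using
      relIndex_mul_relIndex ⊥ (H ⊓ K) H bot_le inf_le_left
  rw [← hsup, ← hinf, hsecond]
  ring

lemma closure_le_centralizer_closure {s t : Set G} (h : ∀ g ∈ s, ∀ k ∈ t, Commute g k) :
    closure s ≤ centralizer (closure t : Set G) := by
  rw [centralizer_closure, closure_le]
  exact fun g hg k hk => (h g hg k hk).symm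

lemma mul_self_eq_one_of_commute {x y : G} (hx : x * x = 1) (hy : y * y = 1) (h : Commute x y) :
    x * y * (x * y) = 1 := by
  rw [h.symm.mul_mul_mul_comm, hx, hy, one_mul]

lemma mul_pow_swap_of_mul_self_eq_one {x y : G} (hx : x * x = 1) (hy : y * y = 1) (n : ℕ) :
    (y * x) ^ n = ((x * y) ^ n)⁻¹ := by
  rw [← inv_pow, mul_inv_rev, inv_eq_of_mul_eq_one_left hx, inv_eq_of_mul_eq_one_left hy]

lemma mem_zpowers_iff_of_mul_self_eq_one {g u : G} (hu : u * u = 1) :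
    g ∈ zpowers u ↔ g = 1 ∨ g = u := by
  constructor
  · intro hg
    obtain ⟨k, rfl⟩ := mem_zpowers_iff.mp hg
    obtain ⟨j, rfl | rfl⟩ := Int.even_or_odd' k
    · exact Or.inl (by rw [zpow_mul, zpow_two, hu, one_zpow])
    · exact Or.inr (by rw [zpow_add_one, zpow_mul, zpow_two, hu, one_zpow, one_mul])
  · rintro (rfl | rfl)
    exacts [one_mem _, mem_zpowers _]

lemma card_zpowers_sup {N : Subgroup G} {u : G} (hu : u * u = 1) (huN : u ∉ N)
    (hnorm : u ∈ normalizer (N : Set G)) : Nat.card ↥(zpowers u ⊔ N) = 2 * Nat.card N := by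
  have hdisj : zpowers u ⊓ N = ⊥ := by
    refine (eq_bot_iff_forall _).mpr fun g ⟨hgu, hgN⟩ => ?_
    exact ((mem_zpowers_iff_of_mul_self_eq_one hu).mp hgu).resolve_right
      fun h => huN (h ▸ hgN)
  have horder : orderOf u = 2 :=
    orderOf_eq_prime (by rw [sq, hu]) (ne_of_mem_of_not_mem (one_mem N) huN).symm
  have hcard := card_sup_mul_card_inf (zpowers_le.mpr hnorm)
  rwa [hdisj, card_bot, mul_one, Nat.card_zpowers, horder] at hcard

lemma card_closure_insert_of_commute {s : Set G} {u : G} (hu : u * u = 1) (hus : u ∉ closure s)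
    (hcomm : ∀ g ∈ s, Commute u g) :
    Nat.card ↥(closure (insert u s)) = 2 * Nat.card ↥(closure s) := by
  rw [Set.insert_eq, Subgroup.closure_union, ← zpowers_eq_closure]
  refine card_zpowers_sup hu hus (centralizer_le_normalizer _ ?_)
  rw [centralizer_closure]
  exact fun g hg => (hcomm g hg).symm

lemma closure_insert_mul_right {s : Set G} {g : G} (u : G) (hg : g ∈ closure s) :
    closure (insert (u * g) s) = closure (insert u s) := by
  have hle (v : G) : closure s ≤ closure (insert v s) := closure_mono (Set.subset_insert v s)
  refine le_antisymm ?_ ?_ <;> rw [closure_le, Set.insert_subset_iff]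
  · exact ⟨mul_mem (subset_closure (Set.mem_insert u s)) (hle _ hg),
      subset_closure.trans (hle _)⟩
  · exact ⟨(mul_mem_cancel_right (hle _ hg)).mp (subset_closure (Set.mem_insert _ s)),
      subset_closure.trans (hle _)⟩

end Group

lemma notMem_closure_of_apply_ne {X : Type*} {s : Set (Equiv.Perm X)} {g : Equiv.Perm X} {x : X}
    (hs : ∀ h ∈ s, h x = x) (hg : g x ≠ x) : g ∉ Subgroup.closure s := fun h =>
  hg ((Subgroup.closure_le (MulAction.stabilizer (Equiv.Perm X) x)).mpr hs h)

/-! ### Dihedral groups -/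

section Dihedral

open Subgroup

variable {G : Type*} [Group G] {x y : G}

lemma semiconjBy_mul_inv (hx : x * x = 1) (hy : y * y = 1) :
    SemiconjBy x (x * y) (x * y)⁻¹ := by
  rw [SemiconjBy, mul_inv_rev, inv_eq_of_mul_eq_one_left hx, inv_eq_of_mul_eq_one_left hy,
    mul_assoc, hx, mul_one, ← mul_assoc, hx, one_mul]

lemma closure_pair_eq_zpowers_sup : closure {x, y} = zpowers x ⊔ zpowers (x * y) := by
  rw [zpowers_eq_closure, zpowers_eq_closure, ← Subgroup.closure_union, Set.singleton_union]
  refine le_antisymm ?_ ?_ <;> rw [closure_le, Set.pair_subset_iff]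
  · have hx : x ∈ closure {x, x * y} := subset_closure (by simp)
    exact ⟨hx, (mul_mem_cancel_left hx).mp (subset_closure (by simp))⟩
  · have hx : x ∈ closure {x, y} := subset_closure (by simp)
    exact ⟨hx, mul_mem hx (subset_closure (by simp))⟩

lemma mem_normalizer_zpowers_mul (hx : x * x = 1) (hy : y * y = 1) :
    x ∈ normalizer (zpowers (x * y) : Set G) := by
  rw [← zpowers_le, le_normalizer_iff]
  rintro h hh _ ⟨k, rfl⟩
  obtain rfl | rfl := (mem_zpowers_iff_of_mul_self_eq_one hx).mp hh
  · simp
  · rw [((semiconjBy_mul_inv hx hy).zpow_right k).eq, mul_inv_cancel_right]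
    exact zpow_mem (inv_mem (mem_zpowers _)) k

lemma mul_zpow_two_mul_eq_one_of_commute (hx : x * x = 1) (hy : y * y = 1) {k : ℤ}
    (h : Commute x ((x * y) ^ k)) : (x * y) ^ (2 * k) = 1 := by
  have hinv : (x * y) ^ k = (x * y)⁻¹ ^ k :=
    mul_right_cancel (h.symm.eq.trans ((semiconjBy_mul_inv hx hy).zpow_right k).eq)
  rw [two_mul, zpow_add, mul_eq_one_iff_eq_inv, ← inv_zpow, ← hinv]

lemma not_commute_mul (hx : x * x = 1) (hy : y * y = 1) (hxy : (x * y) ^ 2 ≠ 1) :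
    ¬Commute x (x * y) := fun h =>
  hxy (by simpa using mul_zpow_two_mul_eq_one_of_commute hx hy (k := 1) (by simpa using h))

lemma card_closure_pair (hx : x * x = 1) (hy : y * y = 1) (hxy : (x * y) ^ 2 ≠ 1) :
    Nat.card ↥(closure {x, y}) = 2 * orderOf (x * y) := by
  have hmem : x ∉ zpowers (x * y) := by
    rintro ⟨k, hk : (x * y) ^ k = x⟩
    refine not_commute_mul hx hy hxy ?_
    nth_rw 1 [← hk]
    exact Commute.zpow_self (x * y) k
  rw [closure_pair_eq_zpowers_sup, card_zpowers_sup hx hmem (mem_normalizer_zpowers_mul hx hy),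
    Nat.card_zpowers]

lemma mem_zpowers_of_mem_closure_pair_of_commute (hx : x * x = 1) (hy : y * y = 1)
    (hxy : (x * y) ^ 2 ≠ 1) {n : ℕ} (hn : orderOf (x * y) = 2 * n) {g : G}
    (hg : g ∈ closure {x, y}) (hgx : Commute g x) (hgy : Commute g y) :
    g ∈ zpowers ((x * y) ^ n) := by
  rw [closure_pair_eq_zpowers_sup, ← SetLike.mem_coe, coe_mul_of_left_le_normalizer_right _ _
    (zpowers_le.mpr (mem_normalizer_zpowers_mul hx hy))] at hg
  obtain ⟨h, hh, _, ⟨k, rfl⟩, rfl⟩ := hg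
  obtain rfl | rfl := (mem_zpowers_iff_of_mul_self_eq_one hx).mp hh
  · simp only [one_mul] at hgx ⊢
    have hdvd : (2 * n : ℤ) ∣ 2 * k := by
      rw [← Nat.cast_ofNat, ← Nat.cast_mul, ← hn, orderOf_dvd_iff_zpow_eq_one]
      exact mul_zpow_two_mul_eq_one_of_commute hx hy hgx.symm
    obtain ⟨j, rfl⟩ := (mul_dvd_mul_iff_left two_ne_zero).mp hdvd
    rw [zpow_mul, zpow_natCast]
    exact zpow_mem (mem_zpowers _) j
  · refine absurd ?_ (not_commute_mul hx hy hxy)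
    simpa using (hgx.mul_right hgy).mul_left (Commute.zpow_self (h * y) (-k))

lemma sq_ne_one_of_orderOf_eq_two_mul {g : G} {n : ℕ} (hg : orderOf g = 2 * n) (hn : 1 < n) :
    g ^ 2 ≠ 1 :=
  pow_ne_one_of_lt_orderOf two_ne_zero (by omega)

/-- The two dihedral groups intersect exactly in their common center `⟨(x * y) ^ n⟩`. -/
lemma card_closure_of_pow_eq_pow {u v : G} {n m : ℕ} (hx : x * x = 1) (hy : y * y = 1)
    (hu : u * u = 1) (hv : v * v = 1) (hux : Commute u x) (huy : Commute u y) (hvx : Commute v x)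
    (hvy : Commute v y) (hn : 1 < n) (hm : 1 < m) (hxy : orderOf (x * y) = 2 * n)
    (huv : orderOf (u * v) = 2 * m) (hpow : (x * y) ^ n = (u * v) ^ m) :
    Nat.card ↥(closure {x, y, u, v}) = 8 * n * m := by
  have hxy_sq := sq_ne_one_of_orderOf_eq_two_mul hxy hn
  have hcent : closure {u, v} ≤ centralizer (closure {x, y} : Set G) :=
    closure_le_centralizer_closure (by simp [hux, huy, hvx, hvy])
  have hinf : closure {u, v} ⊓ closure {x, y} = zpowers ((x * y) ^ n) := by
    refine le_antisymm (fun g ⟨hguv, hgxy⟩ => ?_) (zpowers_le.mpr ⟨hpow ▸ ?_, ?_⟩)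
    · exact mem_zpowers_of_mem_closure_pair_of_commute hx hy hxy_sq hxy hgxy
        (hcent hguv x (subset_closure (by simp))).symm
        (hcent hguv y (subset_closure (by simp))).symm
    · exact pow_mem (mul_mem (subset_closure (by simp)) (subset_closure (by simp))) m
    · exact pow_mem (mul_mem (subset_closure (by simp)) (subset_closure (by simp))) n
  have hcenter : Nat.card ↥(zpowers ((x * y) ^ n)) = 2 := by
    rw [Nat.card_zpowers, orderOf_pow_of_dvd (by omega) (hxy ▸ dvd_mul_left n 2), hxy,
      Nat.mul_div_cancel _ (by omega)]
  have hsup : closure {x, y, u, v} = closure {u, v} ⊔ closure {x, y} := by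
    rw [sup_comm, ← Subgroup.closure_union, Set.insert_union, Set.singleton_union]
  have hcard := card_sup_mul_card_inf (hcent.trans (centralizer_le_normalizer _))
  rw [← hsup, hinf, hcenter, card_closure_pair hx hy hxy_sq, hxy,
    card_closure_pair hu hv (sq_ne_one_of_orderOf_eq_two_mul huv hm), huv] at hcard
  linarith

end Dihedral

/-! ### Sections -/

/-- The permutation `g` of the words over `X` fixes first letters and acts on the tail of a word
beginning with `x` by its section `s x`; in wreath recursion notation, `g = (s x)ₓ`. -/
structure HasSections {X : Type*} (g : Equiv.Perm (List X)) (s : X → Equiv.Perm (List X)) :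
    Prop where
  map_nil : g [] = []
  map_cons : ∀ x w, g (x :: w) = x :: s x w

namespace HasSections

variable {X : Type*} {g g' : Equiv.Perm (List X)} {s s' : X → Equiv.Perm (List X)}

lemma mul (h : HasSections g s) (h' : HasSections g' s') : HasSections (g * g') (s * s') where
  map_nil := by rw [Equiv.Perm.mul_apply, h'.map_nil, h.map_nil]
  map_cons x w := by
    rw [Equiv.Perm.mul_apply, h'.map_cons, h.map_cons, Pi.mul_apply, Equiv.Perm.mul_apply]

lemma pow (h : HasSections g s) (n : ℕ) : HasSections (g ^ n) (s ^ n) := by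
  induction n with
  | zero => exact ⟨rfl, fun _ _ => rfl⟩
  | succ n ih => simpa only [pow_succ] using ih.mul h

lemma unique (h : HasSections g s) (h' : HasSections g' s) : g = g' := by
  ext1 w
  cases w with
  | nil => rw [h.map_nil, h'.map_nil]
  | cons x w => rw [h.map_cons, h'.map_cons]

lemma eq_one_iff (h : HasSections g s) : g = 1 ↔ ∀ x, s x = 1 := by
  refine ⟨fun hg x => Equiv.ext fun w => ?_, fun hs => ?_⟩
  · simpa only [hg, Equiv.Perm.one_apply, List.cons.injEq, true_and] using (h.map_cons x w).symm
  · obtain rfl : s = 1 := funext hs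
    exact h.unique ⟨rfl, fun _ _ => rfl⟩

lemma eq_one_of_sections (h : HasSections g s) (hs : ∀ x, s x = 1 ∨ s x = g ∨ s x = g⁻¹) :
    g = 1 := by
  ext1 w
  induction w with
  | nil => exact h.map_nil
  | cons x w ih =>
    have hfix : s x w = w := by
      rcases hs x with hx | hx | hx <;> rw [hx]
      · rfl
      · exact ih
      · exact Equiv.Perm.inv_eq_iff_eq.mpr ih.symm
    rw [h.map_cons, hfix, Equiv.Perm.one_apply]

end HasSections

lemma mul_self_apply {X : Type*} {g : Equiv.Perm X} (hg : g * g = 1) (x : X) : g (g x) = x :=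
  DFunLike.congr_fun hg x

lemma commute_apply {X : Type*} {g h : Equiv.Perm X} (hgh : Commute g h) (x : X) :
    g (h x) = h (g x) :=
  DFunLike.congr_fun hgh.eq x

/-! ### Relations among the generators -/

namespace NekSystem

variable (S : NekSystem)

attribute [local simp] permSigma permPi hα ha hβ0 hβ1 hβ2 hβ3 hγ0 hγ1 hγ2 hγ3 hb0 hb1 hb2 hb3
  hc0 hc1 hc2 hc3 hαnil hβnil hγnil hanil hbnil hcnil

lemma α_mul_self : S.α * S.α = 1 := by
  ext1 w
  rcases w with _ | ⟨x, w⟩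
  · simp
  · fin_cases x <;> simp

lemma a_mul_self : S.a * S.a = 1 := by
  ext1 w
  rcases w with _ | ⟨x, w⟩
  · simp
  · fin_cases x <;> simp

lemma β_mul_self_and_γ_mul_self : S.β * S.β = 1 ∧ S.γ * S.γ = 1 := by
  suffices h : ∀ w, S.β (S.β w) = w ∧ S.γ (S.γ w) = w from
    ⟨Equiv.ext fun w => (h w).1, Equiv.ext fun w => (h w).2⟩
  intro w
  induction w with
  | nil => simp
  | cons x w ih => fin_cases x <;> simp [mul_self_apply S.α_mul_self, ih]

lemma β_mul_self : S.β * S.β = 1 := S.β_mul_self_and_γ_mul_self.1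

lemma γ_mul_self : S.γ * S.γ = 1 := S.β_mul_self_and_γ_mul_self.2

lemma commute_a_α : Commute S.a S.α := by
  ext1 w
  rcases w with _ | ⟨x, w⟩
  · simp
  · fin_cases x <;> simp

lemma commute_a_β : Commute S.a S.β := by
  ext1 w
  rcases w with _ | ⟨x, w⟩
  · simp
  · fin_cases x <;> simp

lemma commute_b_α : Commute S.b S.α := by
  ext1 w
  rcases w with _ | ⟨x, w⟩
  · simp
  · fin_cases x <;> simp

lemma commute_c_α : Commute S.c S.α := by
  ext1 w
  rcases w with _ | ⟨x, w⟩
  · simp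
  · fin_cases x <;> simp

lemma commute_aα_γ : Commute (S.a * S.α) S.γ := by
  ext1 w
  rcases w with _ | ⟨x, w⟩
  · simp
  · fin_cases x <;> simp

lemma commute_b_β_and_commute_c_γ : Commute S.b S.β ∧ Commute S.c S.γ := by
  suffices h : ∀ w, S.b (S.β w) = S.β (S.b w) ∧ S.c (S.γ w) = S.γ (S.c w) from
    ⟨Equiv.ext fun w => (h w).1, Equiv.ext fun w => (h w).2⟩
  have haαγ (w : Word) : S.a (S.α (S.γ w)) = S.γ (S.a (S.α w)) := commute_apply S.commute_aα_γ w
  intro w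
  induction w with
  | nil => simp
  | cons x w ih =>
    fin_cases x <;> simp [← commute_apply S.commute_a_α, commute_apply S.commute_c_α,
      mul_self_apply S.α_mul_self, mul_self_apply S.β_mul_self, haαγ, ih]

lemma commute_b_β : Commute S.b S.β := S.commute_b_β_and_commute_c_γ.1

lemma commute_c_γ : Commute S.c S.γ := S.commute_b_β_and_commute_c_γ.2

lemma b_mul_self_and_c_mul_self : S.b * S.b = 1 ∧ S.c * S.c = 1 := by
  suffices h : ∀ w, S.b (S.b w) = w ∧ S.c (S.c w) = w from
    ⟨Equiv.ext fun w => (h w).1, Equiv.ext fun w => (h w).2⟩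
  intro w
  induction w with
  | nil => simp
  | cons x w ih =>
    fin_cases x <;> simp [commute_apply S.commute_a_α, commute_apply S.commute_b_β,
      mul_self_apply S.α_mul_self, mul_self_apply S.a_mul_self, mul_self_apply S.β_mul_self, ih]

lemma b_mul_self : S.b * S.b = 1 := S.b_mul_self_and_c_mul_self.1

lemma c_mul_self : S.c * S.c = 1 := S.b_mul_self_and_c_mul_self.2

lemma commute_bβ_γ_and_commute_cγ_β :
    Commute (S.b * S.β) S.γ ∧ Commute (S.c * S.γ) S.β := by
  suffices h : ∀ w, S.b (S.β (S.γ w)) = S.γ (S.b (S.β w)) ∧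
      S.c (S.γ (S.β w)) = S.β (S.c (S.γ w)) from
    ⟨Equiv.ext fun w => (h w).1, Equiv.ext fun w => (h w).2⟩
  intro w
  induction w with
  | nil => simp
  | cons x w ih =>
    fin_cases x <;> simp [commute_apply S.commute_a_β, commute_apply S.commute_b_α,
      mul_self_apply S.α_mul_self, mul_self_apply S.β_mul_self, ih]

lemma commute_bβ_γ : Commute (S.b * S.β) S.γ := S.commute_bβ_γ_and_commute_cγ_β.1

lemma commute_cγ_β : Commute (S.c * S.γ) S.β := S.commute_bβ_γ_and_commute_cγ_β.2

lemma commute_a_cγ : Commute S.a (S.c * S.γ) := by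
  ext1 w
  rcases w with _ | ⟨x, w⟩
  · simp
  · fin_cases x <;> simp [mul_self_apply S.β_mul_self]

lemma aα_mul_self : S.a * S.α * (S.a * S.α) = 1 :=
  mul_self_eq_one_of_commute S.a_mul_self S.α_mul_self S.commute_a_α

lemma bβ_mul_self : S.b * S.β * (S.b * S.β) = 1 :=
  mul_self_eq_one_of_commute S.b_mul_self S.β_mul_self S.commute_b_β

lemma cγ_mul_self : S.c * S.γ * (S.c * S.γ) = 1 :=
  mul_self_eq_one_of_commute S.c_mul_self S.γ_mul_self S.commute_c_γ

/-! ### Orders of the rotations -/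

lemma β_ne_one : S.β ≠ 1 := fun h => by simpa using DFunLike.congr_fun h [0, 0]

lemma hasSections_of_forall_letter {g h₀ h₁ h₂ h₃ : Equiv.Perm Word} (hnil : g [] = [])
    (e₀ : ∀ w, g (0 :: w) = 0 :: h₀ w) (e₁ : ∀ w, g (1 :: w) = 1 :: h₁ w)
    (e₂ : ∀ w, g (2 :: w) = 2 :: h₂ w) (e₃ : ∀ w, g (3 :: w) = 3 :: h₃ w) :
    HasSections g ![h₀, h₁, h₂, h₃] := by
  refine ⟨hnil, fun x w => ?_⟩
  fin_cases x
  exacts [e₀ w, e₁ w, e₂ w, e₃ w]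

lemma hasSections_β : HasSections S.β ![S.α, S.γ, S.α, S.γ] := by
  apply hasSections_of_forall_letter <;> simp

lemma hasSections_γ : HasSections S.γ ![S.β, 1, 1, S.β] := by
  apply hasSections_of_forall_letter <;> simp

lemma hasSections_b : HasSections S.b ![S.a * S.α, S.a * S.α, S.c, S.c] := by
  apply hasSections_of_forall_letter <;> simp

lemma hasSections_c : HasSections S.c ![S.b * S.β, S.b * S.β, S.b, S.b] := by
  apply hasSections_of_forall_letter <;> simp

lemma hasSections_αγ_sq : HasSections ((S.α * S.γ) ^ 2) fun _ => S.β := by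
  refine ⟨by simp [sq], fun x w => ?_⟩
  fin_cases x <;> simp [sq]

lemma αγ_sq_ne_one : (S.α * S.γ) ^ 2 ≠ 1 := fun h =>
  S.β_ne_one (S.hasSections_αγ_sq.eq_one_iff.mp h 0)

lemma αγ_pow_four : (S.α * S.γ) ^ 4 = 1 := by
  rw [pow_mul _ 2 2, (S.hasSections_αγ_sq.pow 2).eq_one_iff]
  exact fun _ => (sq S.β).trans S.β_mul_self

lemma orderOf_αγ : orderOf (S.α * S.γ) = 4 :=
  orderOf_eq_prime_pow (p := 2) (n := 1) S.αγ_sq_ne_one S.αγ_pow_four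

lemma inv_αγ_sq : ((S.α * S.γ) ^ 2)⁻¹ = (S.α * S.γ) ^ 2 :=
  inv_eq_of_mul_eq_one_left (by rw [← pow_add, S.αγ_pow_four])

lemma γα_sq : (S.γ * S.α) ^ 2 = (S.α * S.γ) ^ 2 := by
  rw [mul_pow_swap_of_mul_self_eq_one S.α_mul_self S.γ_mul_self, inv_αγ_sq]

lemma aαc_sq : (S.a * S.α * S.c) ^ 2 = (S.α * S.γ) ^ 2 := by
  refine HasSections.unique ⟨by simp [sq], fun x w => ?_⟩ S.hasSections_αγ_sq
  fin_cases x <;> simp [sq, commute_apply S.commute_b_β, mul_self_apply S.b_mul_self]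

lemma orderOf_aαc : orderOf (S.a * S.α * S.c) = 4 :=
  orderOf_eq_prime_pow (p := 2) (n := 1) (by rw [pow_one, aαc_sq]; exact S.αγ_sq_ne_one)
    (by rw [pow_succ, pow_one, pow_mul, aαc_sq, ← pow_mul]; exact S.αγ_pow_four)

lemma caα_sq : (S.c * (S.a * S.α)) ^ 2 = (S.α * S.γ) ^ 2 := by
  rw [mul_pow_swap_of_mul_self_eq_one S.aα_mul_self S.c_mul_self, aαc_sq, inv_αγ_sq]

lemma hasSections_αβ_sq :
    HasSections ((S.α * S.β) ^ 2) ![S.γ * S.α, S.α * S.γ, S.γ * S.α, S.α * S.γ] := by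
  apply hasSections_of_forall_letter <;> simp [sq]

lemma hasSections_αβ_pow_four : HasSections ((S.α * S.β) ^ 4) fun _ => (S.α * S.γ) ^ 2 := by
  rw [pow_mul _ 2 2]
  convert S.hasSections_αβ_sq.pow 2 using 1
  funext x
  fin_cases x <;> simp [γα_sq]

lemma αβ_pow_four_ne_one : (S.α * S.β) ^ 4 ≠ 1 := fun h =>
  S.αγ_sq_ne_one (S.hasSections_αβ_pow_four.eq_one_iff.mp h 0)

lemma αβ_pow_eight : (S.α * S.β) ^ 8 = 1 := by
  rw [pow_mul _ 4 2, (S.hasSections_αβ_pow_four.pow 2).eq_one_iff]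
  exact fun _ => (pow_mul _ 2 2).symm.trans S.αγ_pow_four

lemma orderOf_αβ : orderOf (S.α * S.β) = 8 :=
  orderOf_eq_prime_pow (p := 2) (n := 2) S.αβ_pow_four_ne_one S.αβ_pow_eight

lemma hasSections_ab_sq : HasSections ((S.a * S.b) ^ 2)
    ![S.c * (S.a * S.α), S.c * (S.a * S.α), S.a * S.α * S.c, S.a * S.α * S.c] := by
  apply hasSections_of_forall_letter <;> simp [sq]

lemma ab_pow_four : (S.a * S.b) ^ 4 = (S.α * S.β) ^ 4 := by
  refine HasSections.unique ?_ S.hasSections_αβ_pow_four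
  rw [pow_mul _ 2 2]
  convert S.hasSections_ab_sq.pow 2 using 1
  funext x
  fin_cases x <;> simp [caα_sq, aαc_sq]

lemma orderOf_ab : orderOf (S.a * S.b) = 8 :=
  orderOf_eq_prime_pow (p := 2) (n := 2) (by simpa [ab_pow_four] using S.αβ_pow_four_ne_one)
    ((pow_mul _ 4 2).trans (by rw [ab_pow_four, ← pow_mul, αβ_pow_eight]))

lemma βγ_pow_four_ne_one : (S.β * S.γ) ^ 4 ≠ 1 := fun h =>
  S.αβ_pow_four_ne_one (((S.hasSections_β.mul S.hasSections_γ).pow 4).eq_one_iff.mp h 0)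

lemma βγ_pow_eight : (S.β * S.γ) ^ 8 = 1 := by
  have hα : S.α ^ 8 = 1 := by rw [pow_mul _ 2 4, sq, α_mul_self, one_pow]
  have hγ : S.γ ^ 8 = 1 := by rw [pow_mul _ 2 4, sq, γ_mul_self, one_pow]
  refine ((S.hasSections_β.mul S.hasSections_γ).pow 8).eq_one_of_sections fun x => ?_
  fin_cases x
  · exact Or.inl S.αβ_pow_eight
  · exact Or.inl hγ
  · exact Or.inl hα
  · exact Or.inr (Or.inr (mul_pow_swap_of_mul_self_eq_one S.β_mul_self S.γ_mul_self 8))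

lemma orderOf_βγ : orderOf (S.β * S.γ) = 8 :=
  orderOf_eq_prime_pow (p := 2) (n := 2) S.βγ_pow_four_ne_one S.βγ_pow_eight

lemma aαbβ_pow_four : (S.a * S.α * (S.b * S.β)) ^ 4 = 1 := by
  have hcomm : Commute (S.a * S.b) (S.α * S.β) :=
    (S.commute_a_α.mul_right S.commute_a_β).mul_left (S.commute_b_α.mul_right S.commute_b_β)
  rw [S.commute_b_α.symm.mul_mul_mul_comm, hcomm.mul_pow, ab_pow_four, ← pow_add, αβ_pow_eight]

lemma aαbβ_sq_apply : ((S.a * S.α * (S.b * S.β)) ^ 2) [0, 0] = [0, 2] := by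
  simp [sq]

lemma orderOf_aαbβ : orderOf (S.a * S.α * (S.b * S.β)) = 4 :=
  orderOf_eq_prime_pow (p := 2) (n := 1)
    (fun h => by simpa [S.aαbβ_sq_apply] using DFunLike.congr_fun h [0, 0]) S.aαbβ_pow_four

lemma bc_pow_four : (S.b * S.c) ^ 4 = 1 := by
  refine ((S.hasSections_b.mul S.hasSections_c).pow 4).eq_one_of_sections fun x => ?_
  have hswap := mul_pow_swap_of_mul_self_eq_one S.b_mul_self S.c_mul_self 4
  fin_cases x
  exacts [Or.inl S.aαbβ_pow_four, Or.inl S.aαbβ_pow_four, Or.inr (Or.inr hswap),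
    Or.inr (Or.inr hswap)]

lemma orderOf_bc : orderOf (S.b * S.c) = 4 := by
  refine orderOf_eq_prime_pow (p := 2) (n := 1) (fun h => ?_) S.bc_pow_four
  have hsection : (S.a * S.α * (S.b * S.β)) ^ 2 = 1 :=
    ((S.hasSections_b.mul S.hasSections_c).pow 2).eq_one_iff.mp h 0
  exact absurd (orderOf_dvd_of_pow_eq_one hsection) (by rw [orderOf_aαbβ]; decide)

/-- From `bc = (bβ · cγ) · βγ`, a product of commuting elements, and `(bc)⁴ = 1`. -/
lemma bβcγ_pow_four : (S.b * S.β * (S.c * S.γ)) ^ 4 = (S.β * S.γ) ^ 4 := by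
  have hcomm : Commute (S.b * S.β * (S.c * S.γ)) (S.β * S.γ) :=
    ((S.commute_b_β.mul_left (Commute.refl _)).mul_left S.commute_cγ_β).mul_right
      (S.commute_bβ_γ.mul_left (S.commute_c_γ.mul_left (Commute.refl _)))
  have hbc : S.b * S.c = S.b * S.β * (S.c * S.γ) * (S.β * S.γ) := by
    calc
      S.b * S.c = S.b * (S.β * S.β) * (S.c * (S.γ * S.γ)) := by
        rw [β_mul_self, γ_mul_self, mul_one, mul_one]
      _ = S.b * S.β * (S.β * (S.c * S.γ)) * S.γ := by simp only [mul_assoc]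
      _ = S.b * S.β * (S.c * S.γ) * (S.β * S.γ) := by
        rw [← S.commute_cγ_β.eq]
        simp only [mul_assoc]
  have hprod : (S.b * S.β * (S.c * S.γ)) ^ 4 * (S.β * S.γ) ^ 4 = 1 := by
    rw [← hcomm.mul_pow, ← hbc, bc_pow_four]
  have hinv : ((S.β * S.γ) ^ 4)⁻¹ = (S.β * S.γ) ^ 4 :=
    inv_eq_of_mul_eq_one_left (by rw [← pow_add, βγ_pow_eight])
  rw [eq_inv_of_mul_eq_one_left hprod, hinv]

lemma orderOf_bβcγ : orderOf (S.b * S.β * (S.c * S.γ)) = 8 :=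
  orderOf_eq_prime_pow (p := 2) (n := 2) (by simpa [bβcγ_pow_four] using S.βγ_pow_four_ne_one)
    ((pow_mul _ 4 2).trans (by rw [bβcγ_pow_four, ← pow_mul, βγ_pow_eight]))

/-! ### Orders of the subgroups -/

open Subgroup

lemma card_Γ_A : Nat.card ↥(closure {S.β, S.γ, S.b, S.c}) = 128 := by
  have hgen : closure {S.β, S.γ, S.b, S.c} = closure {S.β, S.γ, S.b * S.β, S.c * S.γ} := by
    have hb : closure {S.b * S.β, S.c, S.β, S.γ} = closure {S.b, S.c, S.β, S.γ} :=
      closure_insert_mul_right S.b (subset_closure (by simp))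
    have hc : closure {S.c * S.γ, S.b * S.β, S.β, S.γ} = closure {S.c, S.b * S.β, S.β, S.γ} :=
      closure_insert_mul_right S.c (subset_closure (by simp))
    calc
      closure {S.β, S.γ, S.b, S.c} = closure {S.b, S.c, S.β, S.γ} := by
        congr 1
        grind
      _ = closure {S.c, S.b * S.β, S.β, S.γ} := by rw [← hb, Set.insert_comm]
      _ = closure {S.β, S.γ, S.b * S.β, S.c * S.γ} := by
        rw [← hc]
        congr 1
        grind
  rw [hgen, card_closure_of_pow_eq_pow (n := 4) (m := 4) S.β_mul_self S.γ_mul_self S.bβ_mul_self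
    S.cγ_mul_self (S.commute_b_β.mul_left (Commute.refl _)) S.commute_bβ_γ S.commute_cγ_β
    (S.commute_c_γ.mul_left (Commute.refl _)) (by decide) (by decide) S.orderOf_βγ S.orderOf_bβcγ
    S.bβcγ_pow_four.symm]

lemma card_Γ_B : Nat.card ↥(closure {S.α, S.γ, S.a, S.c}) = 32 := by
  have hgen : closure {S.α, S.γ, S.a, S.c} = closure {S.α, S.γ, S.a * S.α, S.c} := by
    have ha : closure {S.a * S.α, S.α, S.γ, S.c} = closure {S.a, S.α, S.γ, S.c} :=
      closure_insert_mul_right S.a (subset_closure (by simp))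
    rw [Set.insert_comm S.γ, Set.insert_comm S.α, ← ha, Set.insert_comm _ S.α,
      Set.insert_comm _ S.γ]
  rw [hgen, card_closure_of_pow_eq_pow (n := 2) (m := 2) S.α_mul_self S.γ_mul_self S.aα_mul_self
    S.c_mul_self (S.commute_a_α.mul_left (Commute.refl _)) S.commute_aα_γ S.commute_c_α
    S.commute_c_γ (by decide) (by decide) S.orderOf_αγ S.orderOf_aαc S.aαc_sq.symm]

lemma card_Γ_C : Nat.card ↥(closure {S.α, S.β, S.a, S.b}) = 128 := by
  rw [card_closure_of_pow_eq_pow (n := 4) (m := 4) S.α_mul_self S.β_mul_self S.a_mul_self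
    S.b_mul_self S.commute_a_α S.commute_a_β S.commute_b_α S.commute_b_β (by decide) (by decide)
    S.orderOf_αβ S.orderOf_ab S.ab_pow_four.symm]

lemma card_Γ_A₁ : Nat.card ↥(closure {S.α, S.b, S.c}) = 16 := by
  have hα : S.α ∉ closure {S.b, S.c} :=
    notMem_closure_of_apply_ne (x := [0]) (by simp) (by simp)
  rw [card_closure_insert_of_commute S.α_mul_self hα
    (by simp [S.commute_b_α.symm, S.commute_c_α.symm]), card_closure_pair S.b_mul_self S.c_mul_self
    (sq_ne_one_of_orderOf_eq_two_mul (n := 2) S.orderOf_bc (by decide)), orderOf_bc]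

lemma card_Γ_B₁ : Nat.card ↥(closure {S.β, S.a, S.c * S.γ}) = 8 := by
  have ha : S.a ∉ closure {S.β, S.c * S.γ} :=
    notMem_closure_of_apply_ne (x := [0]) (by simp) (by simp)
  have hcγ : S.c * S.γ ∉ closure {S.β} :=
    notMem_closure_of_apply_ne (x := [1, 1, 0]) (by simp) (by simp)
  rw [Set.insert_comm, card_closure_insert_of_commute S.a_mul_self ha
    (by simp [S.commute_a_β, S.commute_a_cγ]), Set.pair_comm,
    card_closure_insert_of_commute S.cγ_mul_self hcγ (by simp [S.commute_cγ_β]),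
    ← zpowers_eq_closure, Nat.card_zpowers,
    orderOf_eq_prime ((sq S.β).trans S.β_mul_self) S.β_ne_one]

lemma card_Γ_C₁ : Nat.card ↥(closure {S.γ, S.a * S.α, S.b * S.β}) = 16 := by
  have hsq := sq_ne_one_of_orderOf_eq_two_mul (n := 2) S.orderOf_aαbβ (by decide)
  have hγ : S.γ ∉ closure {S.a * S.α, S.b * S.β} := by
    intro hmem
    have hcenter : S.γ ∈ zpowers ((S.a * S.α * (S.b * S.β)) ^ 2) :=
      mem_zpowers_of_mem_closure_pair_of_commute S.aα_mul_self S.bβ_mul_self hsq S.orderOf_aαbβ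
        hmem S.commute_aα_γ.symm S.commute_bβ_γ.symm
    have hsq_mul_self : (S.a * S.α * (S.b * S.β)) ^ 2 * (S.a * S.α * (S.b * S.β)) ^ 2 = 1 := by
      rw [← pow_add, aαbβ_pow_four]
    rcases (mem_zpowers_iff_of_mul_self_eq_one hsq_mul_self).mp hcenter with h | h
    · simpa using DFunLike.congr_fun h [0, 0, 0]
    · simpa [S.aαbβ_sq_apply] using DFunLike.congr_fun h [0, 0]
  rw [card_closure_insert_of_commute S.γ_mul_self hγ
    (by simp [S.commute_aα_γ.symm, S.commute_bβ_γ.symm]),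
    card_closure_pair S.aα_mul_self S.bβ_mul_self hsq, orderOf_aαbβ]

end NekSystem

/-- The orders of the six subgroups: |Γ_A| = 128, |Γ_B| = 32, |Γ_C| = 128,
|Γ_{A₁}| = 16, |Γ_{B₁}| = 8, |Γ_{C₁}| = 16. -/
theorem statement7 (S : NekSystem) :
    Nat.card ↥(Subgroup.closure {S.β, S.γ, S.b, S.c} : Subgroup (Equiv.Perm Word)) = 128 ∧
    Nat.card ↥(Subgroup.closure {S.α, S.γ, S.a, S.c} : Subgroup (Equiv.Perm Word)) = 32 ∧
    Nat.card ↥(Subgroup.closure {S.α, S.β, S.a, S.b} : Subgroup (Equiv.Perm Word)) = 128 ∧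
    Nat.card ↥(Subgroup.closure {S.α, S.b, S.c} : Subgroup (Equiv.Perm Word)) = 16 ∧
    Nat.card ↥(Subgroup.closure {S.β, S.a, S.c * S.γ} : Subgroup (Equiv.Perm Word)) = 8 ∧
    Nat.card ↥(Subgroup.closure {S.γ, S.a * S.α, S.b * S.β} : Subgroup (Equiv.Perm Word)) = 16 := by
  exact ⟨S.card_Γ_A, S.card_Γ_B, S.card_Γ_C, S.card_Γ_A₁, S.card_Γ_B₁, S.card_Γ_C₁⟩
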